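/- Let D and F be finite digraphs, each with at least one vertex. The strong product D ⊠ F is an ECD digraph if and only if both D and F are ECD digraphs. -/

import Mathlib

/-- The closed out-neighborhood of `v` in the digraph with arc relation `A`. -/
def closedOut {V : Type*} (A : V → V → Prop) (v : V) : Set V := {v} ∪ {u | A v u}

/-- `S` is an efficient closed dominating (ECD) set: the closed out-neighborhoods
centered in vertices of `S` are pairwise disjoint and cover the whole vertex set. -/
def IsECD {V : Type*} (A : V → V → Prop) (S : Set V) : Prop :=
  (∀ v ∈ S, ∀ w ∈ S, v ≠ w → closedOut A v ∩ closedOut A w = ∅) ∧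
  (⋃ v ∈ S, closedOut A v) = Set.univ

/-- A digraph is an ECD digraph if it admits an ECD set. -/
def IsECDDigraph {V : Type*} (A : V → V → Prop) : Prop := ∃ S, IsECD A S

/-- Arc relation of the strong product of two digraphs. -/
def strongArc {V W : Type*} (A : V → V → Prop) (B : W → W → Prop) :
    V × W → V × W → Prop :=
  fun p q => (A p.1 q.1 ∧ p.2 = q.2) ∨ (p.1 = q.1 ∧ B p.2 q.2) ∨
    (A p.1 q.1 ∧ B p.2 q.2)

/-!
A set `S` is an ECD set exactly when every vertex is dominated by a unique vertex of `S`. Closed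
out-neighborhoods in `D ⊠ F` are products of closed out-neighborhoods, so unique domination in `D`
and in `F` multiplies to unique domination in `D ⊠ F`. Conversely, fix a vertex `w` of `F`: among
the vertices of an ECD set of `D ⊠ F`, those whose second coordinate dominates `w` dominate the
fiber `V(D) × {w}`, and their first coordinates form an ECD set of `D`.
-/

section

variable {V W : Type*} {A : V → V → Prop} {B : W → W → Prop}

theorem mem_closedOut {v u : V} : u ∈ closedOut A v ↔ u = v ∨ A v u :=
  Iff.rfl

theorem isECD_iff_existsUnique {S : Set V} :
    IsECD A S ↔ ∀ x, ∃! v, v ∈ S ∧ x ∈ closedOut A v := by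
  constructor
  · rintro ⟨disjoint, cover⟩ x
    obtain ⟨v, hvS, hxv⟩ := Set.mem_iUnion₂.1 (cover ▸ Set.mem_univ x)
    refine ⟨v, ⟨hvS, hxv⟩, fun w ⟨hwS, hxw⟩ ↦ ?_⟩
    by_contra hwv
    exact Set.notMem_empty x (disjoint w hwS v hvS hwv ▸ ⟨hxw, hxv⟩)
  · refine fun h ↦ ⟨fun v hvS w hwS hvw ↦ ?_, Set.eq_univ_of_forall fun x ↦ ?_⟩
    · exact Set.eq_empty_of_forall_notMem fun x ⟨hxv, hxw⟩ ↦
        hvw ((h x).unique ⟨hvS, hxv⟩ ⟨hwS, hxw⟩)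
    · obtain ⟨v, hvS, hxv⟩ := (h x).exists
      exact Set.mem_biUnion hvS hxv

theorem closedOut_strongArc (p : V × W) :
    closedOut (strongArc A B) p = closedOut A p.1 ×ˢ closedOut B p.2 := by
  ext q
  simp only [mem_closedOut, strongArc, Set.mem_prod, Prod.ext_iff, eq_comm (a := p.1),
    eq_comm (a := p.2)]
  tauto

theorem isECD_strongArc_iff_existsUnique {S : Set (V × W)} :
    IsECD (strongArc A B) S ↔
      ∀ x y, ∃! p, p ∈ S ∧ x ∈ closedOut A p.1 ∧ y ∈ closedOut B p.2 := by
  simp only [isECD_iff_existsUnique, closedOut_strongArc, Set.mem_prod, Prod.forall]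

theorem IsECD.strong_prod {S : Set V} {T : Set W} (hS : IsECD A S) (hT : IsECD B T) :
    IsECD (strongArc A B) (S ×ˢ T) := by
  rw [isECD_iff_existsUnique] at hS hT
  refine isECD_strongArc_iff_existsUnique.2 fun x y ↦ ?_
  obtain ⟨v, ⟨hvS, hxv⟩, v_unique⟩ := hS x
  obtain ⟨w, ⟨hwT, hyw⟩, w_unique⟩ := hT y
  refine ⟨(v, w), ⟨⟨hvS, hwT⟩, hxv, hyw⟩, ?_⟩
  rintro ⟨v', w'⟩ ⟨⟨hvS', hwT'⟩, hxv', hyw'⟩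
  exact Prod.ext (v_unique v' ⟨hvS', hxv'⟩) (w_unique w' ⟨hwT', hyw'⟩)

theorem IsECD.image_fst {S : Set (V × W)} (hS : IsECD (strongArc A B) S) (w : W) :
    IsECD A (Prod.fst '' {p ∈ S | w ∈ closedOut B p.2}) := by
  refine isECD_iff_existsUnique.2 fun x ↦ ?_
  obtain ⟨p, ⟨hpS, hxp, hwp⟩, p_unique⟩ := isECD_strongArc_iff_existsUnique.1 hS x w
  refine ⟨p.1, ⟨⟨p, ⟨hpS, hwp⟩, rfl⟩, hxp⟩, ?_⟩
  rintro _ ⟨⟨q, ⟨hqS, hwq⟩, rfl⟩, hxq⟩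
  exact congrArg Prod.fst (p_unique q ⟨hqS, hxq, hwq⟩)

theorem IsECD.swap {S : Set (V × W)} (hS : IsECD (strongArc A B) S) :
    IsECD (strongArc B A) (Prod.swap ⁻¹' S) := by
  refine isECD_strongArc_iff_existsUnique.2 fun y x ↦ ?_
  refine ((Equiv.prodComm W V).existsUnique_congr fun {p} ↦ ?_).2
    (isECD_strongArc_iff_existsUnique.1 hS x y)
  exact and_congr_right' and_comm

theorem IsECDDigraph.of_strongArc_left [Nonempty W] (h : IsECDDigraph (strongArc A B)) :
    IsECDDigraph A := by
  obtain ⟨S, hS⟩ := h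
  obtain ⟨w⟩ := ‹Nonempty W›
  exact ⟨_, hS.image_fst w⟩

theorem IsECDDigraph.of_strongArc_right [Nonempty V] (h : IsECDDigraph (strongArc A B)) :
    IsECDDigraph B := by
  obtain ⟨S, hS⟩ := h
  exact of_strongArc_left ⟨_, hS.swap⟩

theorem IsECDDigraph.strong_prod (hA : IsECDDigraph A) (hB : IsECDDigraph B) :
    IsECDDigraph (strongArc A B) := by
  obtain ⟨S, hS⟩ := hA
  obtain ⟨T, hT⟩ := hB
  exact ⟨S ×ˢ T, hS.strong_prod hT⟩

end

theorem strong_ecd_iff_general {V W : Type*} [Nonempty V] [Nonempty W]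
    (A : V → V → Prop) (B : W → W → Prop) :
    IsECDDigraph (strongArc A B) ↔ IsECDDigraph A ∧ IsECDDigraph B :=
  ⟨fun h ↦ ⟨h.of_strongArc_left, h.of_strongArc_right⟩, fun ⟨hA, hB⟩ ↦ hA.strong_prod hB⟩

/-- The strong product `D ⊠ F` of two finite nonempty digraphs is an ECD digraph
iff both `D` and `F` are ECD digraphs. -/
theorem strong_ecd_iff {V W : Type*} [Fintype V] [Fintype W] [Nonempty V] [Nonempty W]
    (A : V → V → Prop) (B : W → W → Prop) :
    IsECDDigraph (strongArc A B) ↔ IsECDDigraph A ∧ IsECDDigraph B :=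
  strong_ecd_iff_general A B
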